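/- Let R be an irreducible ADE root system of rank n with chosen positive system R^+, simple roots α_1,…,α_n, fundamental weights ϖ_1,…,ϖ_n, heights h_i = max{ϖ_i·α : α ∈ R}, highest root α̃ = Σᵢ h_i α_i; set α_0 = −α̃, h_0 = 1, ϖ_0 = 0 and I = {0,1,…,n}. For a nonempty subset J ⊂ I, set Q_J = Σ_{i ∈ I∖J} ℤα_i and R_J = {α ∈ R : α ∈ Q_J}. Then {α_i : i ∈ I∖J} is a basis of the root system R_J, and R_J = {α ∈ R : there exists m ∈ {−1,0,1} with ϖ_i·α = m·h_i for all i ∈ J}. -/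

import Mathlib

open scoped RealInnerProductSpace BigOperators

noncomputable section

variable {V : Type} [NormedAddCommGroup V] [InnerProductSpace ℝ V] [FiniteDimensional ℝ V]

/-- An `ADE` root system: a finite set of vectors of norm 2 with pairwise integral inner
products, stable under the associated reflections. -/
def IsADE (R : Set V) : Prop :=
  R.Finite ∧ (∀ α ∈ R, ⟪α, α⟫ = 2) ∧ (∀ α ∈ R, ∀ β ∈ R, ∃ k : ℤ, ⟪α, β⟫ = (k : ℝ)) ∧
    ∀ α ∈ R, ∀ β ∈ R, β - ⟪β, α⟫ • α ∈ R

/-- A root system is irreducible if it is nonempty and admits no decomposition as an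
orthogonal disjoint union of two nonempty subsets. -/
def IsIrreducibleRS (R : Set V) : Prop :=
  R.Nonempty ∧ ∀ S T : Set V, R = S ∪ T → (∀ s ∈ S, ∀ t ∈ T, ⟪s, t⟫ = 0) →
    S = ∅ ∨ T = ∅

/-- Extension of an `n`-tuple to an `(n+1)`-tuple by prescribing the value at `0`
(affine index set `I = {0, 1, …, n}`). -/
def ext0 {X : Type} {n : ℕ} (x0 : X) (x : Fin n → X) : Fin (n + 1) → X :=
  Fin.cases x0 x

/-- The affine family of roots `α_0 = -α̃, α_1, …, α_n`, where
`α̃ = Σᵢ hᵢ αᵢ` is the highest root. -/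
def affRoot {n : ℕ} (α : Fin n → V) (h : Fin n → ℕ) : Fin (n + 1) → V :=
  ext0 (-(∑ i, (h i : ℝ) • α i)) α

/-- The sub root system `R_J = R ∩ Q_J`, where `Q_J = Σ_{i ∈ I∖J} ℤ αᵢ`. -/
def RJ {n : ℕ} (R : Set V) (α : Fin n → V) (h : Fin n → ℕ) (J : Finset (Fin (n + 1))) :
    Set V :=
  {β ∈ R | β ∈ AddSubgroup.closure (affRoot α h '' {i | i ∉ J})}

/-!
Put `h₀ = 1` and `ϖ₀ = 0`. The affine roots satisfy the relation `∑ᵢ hᵢ αᵢ = 0`, and the weight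
`ϖᵢ` sends `∑ⱼ cⱼ αⱼ` to `cᵢ - c₀ hᵢ`. Hence, if `c` vanishes on `J`, the weights indexed by `J`
take on this combination the values `m hᵢ` with the common level `m = -c₀`. Conversely
`β = ∑ᵢ (⟪ϖᵢ, β⟫ - m hᵢ) αᵢ` for every `m`, and these coefficients vanish on `J` if `β` has level
`m` there. On a root `|⟪ϖᵢ, β⟫| ≤ hᵢ`, which forces `m ∈ {-1, 0, 1}` and fixes the sign of the
coefficients when `m = ±1`; when `m = 0` they are the coordinates of `β` in the simple roots.
-/

theorem mem_closure_image_iff_exists_int {ι M : Type*} [Fintype ι] [AddCommGroup M]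
    (v : ι → M) (s : Set ι) (x : M) :
    x ∈ AddSubgroup.closure (v '' s) ↔
      ∃ c : ι → ℤ, (∀ i ∉ s, c i = 0) ∧ x = ∑ i, c i • v i := by
  rw [← Submodule.span_int_eq_addSubgroupClosure, Submodule.mem_toAddSubgroup,
    Finsupp.mem_span_image_iff_linearCombination, Finsupp.equivFunOnFinite.exists_congr_left]
  simp [Finsupp.mem_supported', Finsupp.linearCombination_apply, Finsupp.sum_fintype, eq_comm]

theorem span_image_eq_span_of_subset_closure {A M ι : Type*} [Ring A] [AddCommGroup M] [Module A M]
    {v : ι → M} {s : Set ι} {T : Set M} (hsub : v '' s ⊆ T)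
    (hT : T ⊆ AddSubgroup.closure (v '' s)) :
    Submodule.span A (v '' s) = Submodule.span A T := by
  refine le_antisymm (Submodule.span_mono hsub) (Submodule.span_le.mpr (hT.trans ?_))
  exact (AddSubgroup.closure_le (Submodule.span A (v '' s)).toAddSubgroup).mpr
    Submodule.subset_span

section

variable {E : Type} [NormedAddCommGroup E] [InnerProductSpace ℝ E] {n : ℕ} {R : Set E}
  {α ϖ : Fin n → E} {h : Fin n → ℕ} {J : Finset (Fin (n + 1))} {β : E}

@[simp]
theorem ext0_zero {X : Type} (x0 : X) (x : Fin n → X) : ext0 x0 x 0 = x0 := rfl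

@[simp]
theorem ext0_succ {X : Type} (x0 : X) (x : Fin n → X) (i : Fin n) : ext0 x0 x i.succ = x i := rfl

theorem sum_smul_affRoot (α : Fin n → E) (h : Fin n → ℕ) (c : Fin (n + 1) → ℝ) :
    ∑ i, c i • affRoot α h i = ∑ i : Fin n, (c i.succ - c 0 * h i) • α i := by
  simp [Fin.sum_univ_succ, affRoot, sub_smul, Finset.smul_sum, smul_smul, neg_add_eq_sub]

/-- The element `β` has level `m` on `J` if `⟪ϖᵢ, β⟫ = m hᵢ` for all `i ∈ J`, where the weights
and heights are extended to the affine index set by `ϖ₀ = 0` and `h₀ = 1`. In particular only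
level `0` is possible when `0 ∈ J`. -/
def HasLevel (ϖ : Fin n → E) (h : Fin n → ℕ) (J : Finset (Fin (n + 1))) (m : ℤ) (β : E) : Prop :=
  ∀ i ∈ J, ⟪ext0 (0 : E) ϖ i, β⟫ = (m : ℝ) * ((ext0 1 h i : ℕ) : ℝ)

theorem HasLevel.neg {m : ℤ} (hβ : HasLevel ϖ h J m β) : HasLevel ϖ h J (-m) (-β) := fun i hi => by
  rw [inner_neg_right, hβ i hi, Int.cast_neg, neg_mul]

theorem ext0_one_pos (hh : ∀ i, 0 < h i) (i : Fin (n + 1)) : 0 < ext0 1 h i :=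
  Fin.cases one_pos hh i

theorem inner_weight_sum_smul (hϖ : ∀ i j, ⟪ϖ i, α j⟫ = if i = j then 1 else 0)
    (c : Fin n → ℝ) (i : Fin n) : ⟪ϖ i, ∑ j, c j • α j⟫ = c i := by
  simp [inner_sum, inner_smul_right, hϖ]

theorem inner_ext0_sum_smul_affRoot (hϖ : ∀ i j, ⟪ϖ i, α j⟫ = if i = j then 1 else 0)
    (c : Fin (n + 1) → ℝ) (i : Fin (n + 1)) :
    ⟪ext0 (0 : E) ϖ i, ∑ j, c j • affRoot α h j⟫ = c i - c 0 * (ext0 1 h i : ℕ) := by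
  rw [sum_smul_affRoot]
  cases i using Fin.cases with
  | zero => simp
  | succ i => exact inner_weight_sum_smul hϖ _ i

theorem linearIndepOn_affRoot (hϖ : ∀ i j, ⟪ϖ i, α j⟫ = if i = j then 1 else 0)
    {s : Set (Fin (n + 1))} {j : Fin (n + 1)} (hj : j ∉ s) (hhj : ext0 1 h j ≠ 0) :
    LinearIndepOn ℝ (affRoot α h) s := by
  rw [linearIndepOn_iff]
  intro c hcs hc
  rw [Finsupp.mem_supported'] at hcs
  rw [Finsupp.linearCombination_apply, Finsupp.sum_fintype _ _ (by simp)] at hc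
  have hproportional (i : Fin (n + 1)) : c i = c 0 * (ext0 1 h i : ℕ) := by
    have := inner_ext0_sum_smul_affRoot (h := h) hϖ c i
    rwa [hc, inner_zero_right, eq_comm, sub_eq_zero] at this
  have hc0 : c 0 = 0 := by
    have := hproportional j
    rw [hcs j hj, zero_eq_mul] at this
    exact this.resolve_right (Nat.cast_ne_zero.mpr hhj)
  ext i
  rw [hproportional, hc0, zero_mul, Finsupp.zero_apply]

theorem exists_hasLevel_of_mem_closure (hϖ : ∀ i j, ⟪ϖ i, α j⟫ = if i = j then 1 else 0)
    (hβ : β ∈ AddSubgroup.closure (affRoot α h '' {i | i ∉ J})) : ∃ m, HasLevel ϖ h J m β := by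
  obtain ⟨c, hcJ, rfl⟩ := (mem_closure_image_iff_exists_int ..).mp hβ
  refine ⟨-c 0, fun i hi => ?_⟩
  simp_rw [← Int.cast_smul_eq_zsmul ℝ]
  rw [inner_ext0_sum_smul_affRoot hϖ (fun j => (c j : ℝ)), hcJ i (not_not.mpr hi)]
  simp

theorem height_pos (hϖ : ∀ i j, ⟪ϖ i, α j⟫ = if i = j then 1 else 0)
    {i : Fin n} (hle : ⟪ϖ i, α i⟫ ≤ h i) : 0 < h i := by
  rw [hϖ, if_pos rfl] at hle
  exact_mod_cast hle

theorem exists_nat_coeff_of_hasLevel_zero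
    (hϖ : ∀ i j, ⟪ϖ i, α j⟫ = if i = j then 1 else 0)
    {c : Fin n → ℕ} (hc : β = ∑ i, (c i : ℝ) • α i)
    (hβ : HasLevel ϖ h J 0 β) :
    ∃ d : Fin (n + 1) → ℕ, (∀ j ∈ J, d j = 0) ∧ β = ∑ i, (d i : ℝ) • affRoot α h i := by
  refine ⟨ext0 0 c, fun j hj => ?_, by simp [sum_smul_affRoot, hc]⟩
  have := hβ j hj
  cases j using Fin.cases with
  | zero => rfl
  | succ j => simpa [hc, inner_weight_sum_smul hϖ] using this

theorem exists_nat_coeff_of_hasLevel_neg_one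
    (hϖ : ∀ i j, ⟪ϖ i, α j⟫ = if i = j then 1 else 0)
    {d : Fin n → ℤ} (hd : β = ∑ i, (d i : ℝ) • α i)
    (hge : ∀ i, -(h i : ℤ) ≤ d i) (hβ : HasLevel ϖ h J (-1) β) :
    ∃ c : Fin (n + 1) → ℕ, (∀ j ∈ J, c j = 0) ∧ β = ∑ i, (c i : ℝ) • affRoot α h i := by
  choose c hc using fun i => Int.eq_ofNat_of_zero_le (neg_le_iff_add_nonneg.mp (hge i))
  have hcast (i : Fin n) : (c i : ℝ) = d i + h i := by exact_mod_cast (hc i).symm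
  refine ⟨ext0 1 c, fun j hj => ?_, by simp [sum_smul_affRoot, hcast, hd]⟩
  have hlevel := hβ j hj
  cases j using Fin.cases with
  | zero => simp at hlevel
  | succ j =>
    rw [ext0_succ, ext0_succ, hd, inner_weight_sum_smul hϖ, Int.cast_neg, Int.cast_one] at hlevel
    rw [ext0_succ, ← Nat.cast_eq_zero (R := ℝ), hcast, hlevel, neg_one_mul, neg_add_cancel]

theorem nat_coeff_of_hasLevel (hϖ : ∀ i j, ⟪ϖ i, α j⟫ = if i = j then 1 else 0)
    (hsign : (∃ c : Fin n → ℕ, β = ∑ i, (c i : ℝ) • α i) ∨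
      (∃ c : Fin n → ℕ, β = -(∑ i, (c i : ℝ) • α i)))
    (habs : ∀ i, |⟪ϖ i, β⟫| ≤ h i) {m : ℤ} (hm : m = -1 ∨ m = 0 ∨ m = 1)
    (hβ : HasLevel ϖ h J m β) :
    (∃ c : Fin (n + 1) → ℕ, (∀ j ∈ J, c j = 0) ∧ β = ∑ i, (c i : ℝ) • affRoot α h i) ∨
      (∃ c : Fin (n + 1) → ℕ, (∀ j ∈ J, c j = 0) ∧
        β = -(∑ i, (c i : ℝ) • affRoot α h i)) := by
  simp_rw [← neg_eq_iff_eq_neg (a := β)] at hsign ⊢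
  obtain ⟨d, hd⟩ : ∃ d : Fin n → ℤ, β = ∑ i, (d i : ℝ) • α i := by
    rcases hsign with ⟨c, hc⟩ | ⟨c, hc⟩
    · exact ⟨fun i => c i, by simpa using hc⟩
    · exact ⟨fun i => -c i, by simpa [neg_eq_iff_eq_neg] using hc⟩
  have hd_abs (i : Fin n) : |d i| ≤ h i := by
    have := habs i
    rw [hd, inner_weight_sum_smul hϖ] at this
    exact_mod_cast this
  rcases hm with rfl | rfl | rfl
  · exact .inl (exists_nat_coeff_of_hasLevel_neg_one hϖ hd (fun i => (abs_le.mp (hd_abs i)).1) hβ)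
  · refine hsign.imp (fun ⟨c, hc⟩ => ?_) fun ⟨c, hc⟩ => ?_
    · exact exists_nat_coeff_of_hasLevel_zero hϖ hc hβ
    · exact exists_nat_coeff_of_hasLevel_zero hϖ hc hβ.neg
  · refine .inr (exists_nat_coeff_of_hasLevel_neg_one hϖ (d := -d) (by simp [hd])
      (fun i => neg_le_neg (abs_le.mp (hd_abs i)).2) hβ.neg)

theorem HasLevel.eq_neg_one_or_zero_or_one {m : ℤ} (hβ : HasLevel ϖ h J m β) (hJ : J.Nonempty)
    (hh : ∀ i, 0 < h i) (habs : ∀ i, |⟪ϖ i, β⟫| ≤ h i) : m = -1 ∨ m = 0 ∨ m = 1 := by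
  obtain ⟨j, hj⟩ := hJ
  have hj_pos : (0 : ℝ) < (ext0 1 h j : ℕ) := Nat.cast_pos.mpr (ext0_one_pos hh j)
  have hj_abs : |⟪ext0 (0 : E) ϖ j, β⟫| ≤ (ext0 1 h j : ℕ) := by
    cases j using Fin.cases with
    | zero => simp
    | succ j => exact habs j
  rw [hβ j hj, abs_mul, Nat.abs_cast, mul_le_iff_le_one_left hj_pos] at hj_abs
  have : |m| ≤ 1 := by exact_mod_cast hj_abs
  grind [Int.abs_le_one_iff]

theorem nat_coeff_sum_mem_closure {c : Fin (n + 1) → ℕ} (hc : ∀ j ∈ J, c j = 0) :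
    ∑ i, (c i : ℝ) • affRoot α h i ∈ AddSubgroup.closure (affRoot α h '' {i | i ∉ J}) :=
  (mem_closure_image_iff_exists_int ..).mpr
    ⟨fun i => c i, by simpa using hc, by simp [Nat.cast_smul_eq_nsmul]⟩

theorem affRoot_mem_RJ (hneg : ∀ β ∈ R, -β ∈ R) (hαR : ∀ i, α i ∈ R)
    (hhighest : ∑ i, (h i : ℝ) • α i ∈ R) {i : Fin (n + 1)} (hi : i ∉ J) :
    affRoot α h i ∈ RJ R α h J :=
  ⟨Fin.cases (hneg _ hhighest) hαR i, AddSubgroup.subset_closure ⟨i, hi, rfl⟩⟩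

theorem abs_inner_le_of_neg_mem {w : E} {a : ℝ} (hneg : ∀ β ∈ R, -β ∈ R)
    (hle : ∀ β ∈ R, ⟪w, β⟫ ≤ a) (hβ : β ∈ R) : |⟪w, β⟫| ≤ a :=
  abs_le'.mpr ⟨hle β hβ, by simpa only [inner_neg_right] using hle _ (hneg β hβ)⟩

theorem IsADE.neg_mem (hR : IsADE R) (hβ : β ∈ R) : -β ∈ R := by
  obtain ⟨-, hnorm, -, hrefl⟩ := hR
  have := hrefl β hβ β hβ
  rwa [hnorm β hβ, two_smul, sub_add_cancel_left] at this

theorem affine_sub_root_system_general (hneg : ∀ β ∈ R, -β ∈ R) (hαR : ∀ i, α i ∈ R)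
    (hpos : ∀ β ∈ R, (∃ c : Fin n → ℕ, β = ∑ i, (c i : ℝ) • α i) ∨
      (∃ c : Fin n → ℕ, β = -(∑ i, (c i : ℝ) • α i)))
    (hϖ : ∀ i j, ⟪ϖ i, α j⟫ = if i = j then 1 else 0)
    (hh : ∀ i, IsGreatest ((fun β => ⟪ϖ i, β⟫) '' R) ((h i : ℝ)))
    (hhighest : (∑ i, (h i : ℝ) • α i) ∈ R) (hJ : J.Nonempty) :
    (∀ i ∉ J, affRoot α h i ∈ RJ R α h J) ∧
    LinearIndependent ℝ (fun i : {i : Fin (n + 1) // i ∉ J} => affRoot α h i.1) ∧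
    Submodule.span ℝ (Set.range fun i : {i : Fin (n + 1) // i ∉ J} => affRoot α h i.1) =
      Submodule.span ℝ (RJ R α h J) ∧
    (∀ β ∈ RJ R α h J,
      (∃ c : Fin (n + 1) → ℕ, (∀ j ∈ J, c j = 0) ∧ β = ∑ i, (c i : ℝ) • affRoot α h i) ∨
      (∃ c : Fin (n + 1) → ℕ, (∀ j ∈ J, c j = 0) ∧
        β = -(∑ i, (c i : ℝ) • affRoot α h i))) ∧
    RJ R α h J =
      {β ∈ R | ∃ m : ℤ, (m = -1 ∨ m = 0 ∨ m = 1) ∧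
        ∀ i ∈ J, ⟪ext0 (0 : E) ϖ i, β⟫ = (m : ℝ) * ((ext0 1 h i : ℕ) : ℝ)} := by
  have hle (i : Fin n) (β : E) (hβ : β ∈ R) : ⟪ϖ i, β⟫ ≤ h i := (hh i).2 ⟨β, hβ, rfl⟩
  have hh_pos (i : Fin n) : 0 < h i := height_pos hϖ (hle i _ (hαR i))
  have habs (β : E) (hβ : β ∈ R) (i : Fin n) : |⟪ϖ i, β⟫| ≤ h i :=
    abs_inner_le_of_neg_mem hneg (hle i) hβ
  have hmem (i : Fin (n + 1)) (hi : i ∉ J) : affRoot α h i ∈ RJ R α h J :=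
    affRoot_mem_RJ hneg hαR hhighest hi
  have hlevel (β : E) (hβ : β ∈ RJ R α h J) :
      ∃ m, (m = -1 ∨ m = 0 ∨ m = 1) ∧ HasLevel ϖ h J m β :=
    let ⟨m, hm⟩ := exists_hasLevel_of_mem_closure hϖ hβ.2
    ⟨m, hm.eq_neg_one_or_zero_or_one hJ hh_pos (habs β hβ.1), hm⟩
  obtain ⟨j, hj⟩ := hJ
  have hindep : LinearIndepOn ℝ (affRoot α h) {i | i ∉ J} :=
    linearIndepOn_affRoot hϖ (not_not.mpr hj) (ext0_one_pos hh_pos j).ne'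
  refine ⟨hmem, hindep, ?_, ?_, ?_⟩
  · have hrange : Set.range (fun i : {i : Fin (n + 1) // i ∉ J} => affRoot α h i.1) =
        affRoot α h '' {i | i ∉ J} := (Set.image_eq_range ..).symm
    rw [hrange]
    exact span_image_eq_span_of_subset_closure (Set.image_subset_iff.mpr hmem) fun _ => And.right
  · intro β hβ
    obtain ⟨m, hm, hβm⟩ := hlevel β hβ
    exact nat_coeff_of_hasLevel hϖ (hpos β hβ.1) (habs β hβ.1) hm hβm
  · refine Set.Subset.antisymm (fun β hβ => ⟨hβ.1, hlevel β hβ⟩) fun β ⟨hβ, m, hm, hβm⟩ => ?_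
    rcases nat_coeff_of_hasLevel hϖ (hpos β hβ) (habs β hβ) hm hβm with
      ⟨c, hc, hβc⟩ | ⟨c, hc, hβc⟩
    · exact ⟨hβ, hβc ▸ nat_coeff_sum_mem_closure hc⟩
    · exact ⟨hβ, hβc ▸ neg_mem (nat_coeff_sum_mem_closure hc)⟩

end

/-- **Lemma (sub root systems from the affine diagram)**. Let `R` be an irreducible ADE
root system of rank `n`, with simple roots `α_i` (of a positive system), fundamental
weights `ϖ_i`, heights `h_i`, highest root `α̃ = Σ h_i α_i`; set `α_0 = -α̃`, `h_0 = 1`,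
`ϖ_0 = 0`. For a nonempty `J ⊆ {0,…,n}`, the family `{α_i : i ∉ J}` is a basis of the
root system `R_J = R ∩ Σ_{i∉J} ℤα_i`, and
`R_J = {α ∈ R : ∃ m ∈ {-1,0,1}, ∀ i ∈ J, ⟪ϖ_i, α⟫ = m·h_i}`. -/
theorem affine_sub_root_system {n : ℕ} (R : Set V)
    (hADE : IsADE R) (hirr : IsIrreducibleRS R)
    (hrank : Module.finrank ℝ (Submodule.span ℝ R) = n)
    (α : Fin n → V) (hαR : ∀ i, α i ∈ R)
    (hli : LinearIndependent ℝ α)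
    (hspan : R ⊆ (Submodule.span ℝ (Set.range α) : Set V))
    (hpos : ∀ β ∈ R, (∃ c : Fin n → ℕ, β = ∑ i, (c i : ℝ) • α i) ∨
      (∃ c : Fin n → ℕ, β = -(∑ i, (c i : ℝ) • α i)))
    (ϖ : Fin n → V) (hϖ : ∀ i j, ⟪ϖ i, α j⟫ = if i = j then 1 else 0)
    (h : Fin n → ℕ) (hh : ∀ i, IsGreatest ((fun β => ⟪ϖ i, β⟫) '' R) ((h i : ℝ)))
    (hhighest : (∑ i, (h i : ℝ) • α i) ∈ R)
    (J : Finset (Fin (n + 1))) (hJ : J.Nonempty) :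
    -- the α_i, i ∉ J, are roots of R_J …
    (∀ i ∉ J, affRoot α h i ∈ RJ R α h J) ∧
    -- … linearly independent …
    LinearIndependent ℝ (fun i : {i : Fin (n + 1) // i ∉ J} => affRoot α h i.1) ∧
    -- … spanning the span of R_J …
    Submodule.span ℝ (Set.range fun i : {i : Fin (n + 1) // i ∉ J} => affRoot α h i.1) =
      Submodule.span ℝ (RJ R α h J) ∧
    -- … and every root of R_J is a combination of them with coefficients all of the
    -- same sign (so they form a basis of the root system R_J) ;
    (∀ β ∈ RJ R α h J,
      (∃ c : Fin (n + 1) → ℕ, (∀ j ∈ J, c j = 0) ∧ β = ∑ i, (c i : ℝ) • affRoot α h i) ∨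
      (∃ c : Fin (n + 1) → ℕ, (∀ j ∈ J, c j = 0) ∧
        β = -(∑ i, (c i : ℝ) • affRoot α h i))) ∧
    -- description of R_J by the fundamental weights
    RJ R α h J =
      {β ∈ R | ∃ m : ℤ, (m = -1 ∨ m = 0 ∨ m = 1) ∧
        ∀ i ∈ J, ⟪ext0 (0 : V) ϖ i, β⟫ = (m : ℝ) * ((ext0 1 h i : ℕ) : ℝ)} :=
  affine_sub_root_system_general (fun _ => hADE.neg_mem) hαR hpos hϖ hh hhighest hJ

end
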